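/- arXiv:2010.11292 — 4 statements merged into one kernel-verified Lean document; each statement's English description precedes it below -/
import Mathlib

section
/- Let d, K be positive integers, X ⊆ ℝ^d a closed convex set with 0 ∈ X, and ψ : ℝ^d → ℝ a function that is 1-strongly convex on X with respect to the Euclidean norm, with ψ(x) ≥ 0 for all x ∈ X and ψ(0) = 0. Let g(1), …, g(K) ∈ ℝ^d be arbitrary vectors and let η(0) ≥ η(1) ≥ … ≥ η(K) > 0 be a nonincreasing positive sequence. Define x(1) = 0 and, for each k ∈ {1,…,K}, let x(k+1) ∈ X be a minimizer over X of x ↦ ⟨Σ_{s=1}^k g(s), x⟩ + ψ(x)/η(k). Then for every x* ∈ X: Σ_{k=1}^K ⟨g(k), x(k) - x*⟩ ≤ (1/2) Σ_{k=1}^K η(k-1) ‖g(k)‖₂² + ψ(x*)/η(K). -/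
open scoped RealInnerProductSpace
open Finset

lemma growth_aux {E : Type*} [NormedAddCommGroup E] [InnerProductSpace ℝ E]
    (X : Set E) (ψ : E → ℝ) (hψ : StrongConvexOn X 1 ψ) (G : E) (η : ℝ) (hη : 0 < η)
    (u : E) (hu : u ∈ X) (hmin : ∀ w ∈ X, ⟪G, u⟫ + ψ u / η ≤ ⟪G, w⟫ + ψ w / η)
    (y : E) (hy : y ∈ X) :
    ⟪G, u⟫ + ψ u / η + ‖y - u‖ ^ 2 / (2 * η) ≤ ⟪G, y⟫ + ψ y / η := by
  have key : ∀ t : ℝ, 0 < t → t < 1 →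
      (1 - t) * (‖y - u‖ ^ 2 / (2 * η)) ≤ (⟪G, y⟫ + ψ y / η) - (⟪G, u⟫ + ψ u / η) := by
    intro t ht ht1
    have h1 := hψ.2 hy hu ht.le (by linarith : (0:ℝ) ≤ 1 - t) (by ring)
    have h2 := hmin _ (hψ.1 hy hu ht.le (by linarith : (0:ℝ) ≤ 1 - t) (by ring))
    simp only [smul_eq_mul] at h1
    rw [inner_add_right, real_inner_smul_right, real_inner_smul_right] at h2
    have h3 := div_le_div_of_nonneg_right h1 hη.le
    have e : (t * ψ y + (1 - t) * ψ u - t * (1 - t) * (1 / 2 * ‖y - u‖ ^ 2)) / η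
        = t * (ψ y / η) + (1 - t) * (ψ u / η) - t * ((1 - t) * (‖y - u‖ ^ 2 / (2 * η))) := by
      field_simp
    rw [e] at h3
    refine le_of_mul_le_mul_left ?_ ht
    linarith
  have h0 := hmin y hy
  by_contra hc
  push Not at hc
  set c := ‖y - u‖ ^ 2 / (2 * η)
  set a := (⟪G, y⟫ + ψ y / η) - (⟪G, u⟫ + ψ u / η) with ha
  have hca : a < c := by linarith
  have ha0 : 0 ≤ a := by linarith
  have hcpos : 0 < c := by linarith
  have := key ((c - a) / (2 * c)) (div_pos (by linarith) (by linarith))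
    ((div_lt_one (by linarith)).2 (by linarith))
  have e : (1 - (c - a) / (2 * c)) * c = (c + a) / 2 := by field_simp; ring
  rw [e] at this
  linarith

lemma young_aux {E : Type*} [NormedAddCommGroup E] [InnerProductSpace ℝ E]
    (g v : E) (η : ℝ) (hη : 0 < η) :
    0 ≤ ⟪g, v⟫ + ‖v‖ ^ 2 / (2 * η) + 1 / 2 * (η * ‖g‖ ^ 2) := by
  have h := sq_nonneg ‖η • g + v‖
  rw [norm_add_sq_real, real_inner_smul_left, norm_smul, mul_pow, Real.norm_eq_abs, sq_abs] at h
  have e : ⟪g, v⟫ + ‖v‖ ^ 2 / (2 * η) + 1 / 2 * (η * ‖g‖ ^ 2)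
      = (η ^ 2 * ‖g‖ ^ 2 + 2 * (η * ⟪g, v⟫) + ‖v‖ ^ 2) / (2 * η) := by
    field_simp; ring
  rw [e]
  positivity

/-- The basic dual-averaging (lazy mirror descent) regret bound:
`Σ_{k=1}^K ⟨g(k), x(k) - x*⟩ ≤ (1/2) Σ_{k=1}^K η(k-1) ‖g(k)‖² + ψ(x*)/η(K)`. -/
theorem stmt_3 (d K : ℕ) (hd : 0 < d) (hK : 0 < K)
    (X : Set (EuclideanSpace ℝ (Fin d))) (hXc : IsClosed X) (hXconv : Convex ℝ X)
    (h0X : (0 : EuclideanSpace ℝ (Fin d)) ∈ X)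
    (ψ : EuclideanSpace ℝ (Fin d) → ℝ) (hψ : StrongConvexOn X 1 ψ)
    (hψnonneg : ∀ x ∈ X, 0 ≤ ψ x) (hψ0 : ψ 0 = 0)
    (g : ℕ → EuclideanSpace ℝ (Fin d))
    (η : ℕ → ℝ) (hηpos : ∀ k ≤ K, 0 < η k) (hηmono : ∀ k < K, η (k + 1) ≤ η k)
    (x : ℕ → EuclideanSpace ℝ (Fin d)) (hx1 : x 1 = 0)
    (hxmem : ∀ k ∈ Icc 1 K, x (k + 1) ∈ X)
    (hxmin : ∀ k ∈ Icc 1 K, ∀ w ∈ X,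
      ⟪∑ s ∈ Icc 1 k, g s, x (k + 1)⟫ + ψ (x (k + 1)) / η k
        ≤ ⟪∑ s ∈ Icc 1 k, g s, w⟫ + ψ w / η k) :
    ∀ xstar ∈ X,
      ∑ k ∈ Icc 1 K, ⟪g k, x k - xstar⟫
        ≤ (1 / 2) * ∑ k ∈ Icc 1 K, η (k - 1) * ‖g k‖ ^ 2 + ψ xstar / η K := by
  intro xstar hxs
  have hmem : ∀ k ≤ K, x (k + 1) ∈ X := by
    intro k hk
    rcases Nat.eq_zero_or_pos k with rfl | h
    · simpa [hx1] using h0X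
    · exact hxmem k (Finset.mem_Icc.2 ⟨h, hk⟩)
  have hmin : ∀ k ≤ K, ∀ w ∈ X,
      ⟪∑ s ∈ Icc 1 k, g s, x (k + 1)⟫ + ψ (x (k + 1)) / η k
        ≤ ⟪∑ s ∈ Icc 1 k, g s, w⟫ + ψ w / η k := by
    intro k hk w hw
    rcases Nat.eq_zero_or_pos k with rfl | h
    · simpa [hx1, hψ0] using div_nonneg (hψnonneg w hw) (hηpos 0 hk).le
    · exact hxmin k (Finset.mem_Icc.2 ⟨h, hk⟩) w hw
  have main : ∀ n ≤ K, ∑ k ∈ Icc 1 n, ⟪g k, x k⟫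
      ≤ (1 / 2) * ∑ k ∈ Icc 1 n, η (k - 1) * ‖g k‖ ^ 2
        + (⟪∑ s ∈ Icc 1 n, g s, x (n + 1)⟫ + ψ (x (n + 1)) / η n) := by
    intro n
    induction n with
    | zero => intro _; simp [hx1, hψ0]
    | succ n ih =>
      intro hn
      have ih := ih (by omega)
      have hpos := hηpos n (by omega)
      have h1 := growth_aux X ψ hψ _ (η n) hpos _ (hmem n (by omega)) (hmin n (by omega))
        (x (n + 1 + 1)) (hmem (n + 1) hn)
      have h2 := young_aux (g (n + 1)) (x (n + 1 + 1) - x (n + 1)) (η n) hpos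
      have h3 := div_le_div_of_nonneg_left (hψnonneg _ (hmem (n + 1) hn))
        (hηpos (n + 1) hn) (hηmono n (by omega))
      rw [Finset.sum_Icc_succ_top (by omega), Finset.sum_Icc_succ_top (by omega),
        Finset.sum_Icc_succ_top (by omega), inner_add_left, Nat.add_sub_cancel]
      rw [inner_sub_right] at h2
      linarith
  have h1 := main K le_rfl
  have h2 := hmin K le_rfl xstar hxs
  simp only [inner_sub_right, Finset.sum_sub_distrib]
  rw [← sum_inner]
  linarith
end

section
/- Let d, n, K be positive integers, X ⊆ ℝ^d a closed convex set, ψ : ℝ^d → ℝ 1-strongly convex on X with respect to the Euclidean norm, and let f : ℝ^d → ℝ be convex and L-Lipschitz on X with respect to the Euclidean norm. Let η(1), …, η(K) > 0, let z_1(k), …, z_n(k) ∈ ℝ^d for k ∈ {1,…,K}, and set z̄(k) = (1/n) Σ_{j=1}^n z_j(k). For each k, let x_i(k) ∈ X be a minimizer over X of x ↦ ⟨z_i(k), x⟩ + ψ(x)/η(k), and let y(k) ∈ X be a minimizer over X of x ↦ ⟨z̄(k), x⟩ + ψ(x)/η(k). Then for every i ∈ {1,…,n} and every x* ∈ X: Σ_{k=1}^K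 [f(x_i(k)) - f(x*)] ≤ Σ_{k=1}^K [f(y(k)) - f(x*)] + L Σ_{k=1}^K η(k) ‖z̄(k) - z_i(k)‖₂. -/
open scoped RealInnerProductSpace
open Finset

theorem aux_min {E : Type*} [NormedAddCommGroup E] [InnerProductSpace ℝ E]
    (X : Set E) (ψ : E → ℝ) (hψ : StrongConvexOn X 1 ψ) (e : ℝ) (he : 0 < e) (u p : E)
    (hp : p ∈ X) (hmin : ∀ w ∈ X, ⟪u, p⟫ + ψ p / e ≤ ⟪u, w⟫ + ψ w / e) (w : E) (hw : w ∈ X) :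
    e * ⟪u, p⟫ + ψ p + ‖p - w‖ ^ 2 / 2 ≤ e * ⟪u, w⟫ + ψ w := by
  have hmin' : ∀ v ∈ X, e * ⟪u, p⟫ + ψ p ≤ e * ⟪u, v⟫ + ψ v := by
    intro v hv
    have h := mul_le_mul_of_nonneg_left (hmin v hv) he.le
    rw [mul_add, mul_add, mul_div_cancel₀ _ he.ne', mul_div_cancel₀ _ he.ne'] at h
    exact h
  have key : ∀ t : ℝ, 0 < t → t < 1 →
      (1 - t) * (‖p - w‖ ^ 2 / 2) ≤ e * ⟪u, w⟫ + ψ w - (e * ⟪u, p⟫ + ψ p) := by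
    intro t ht ht1
    have h1 := hψ.2 hp hw (sub_nonneg.2 ht1.le) ht.le (by ring)
    have h2 := hmin' _ (hψ.1 hp hw (sub_nonneg.2 ht1.le) ht.le (by ring))
    rw [inner_add_right, real_inner_smul_right, real_inner_smul_right] at h2
    simp only [smul_eq_mul] at h1
    refine le_of_mul_le_mul_left ?_ ht
    linarith
  have hA := hmin' w hw
  by_contra hc
  push Not at hc
  set D := ‖p - w‖ ^ 2 with hD
  have hD0 : 0 ≤ D := by positivity
  set A := e * ⟪u, w⟫ + ψ w - (e * ⟪u, p⟫ + ψ p) with hAdef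
  have hlt : A < D / 2 := by linarith
  have hA0 : 0 ≤ A := by linarith
  have hDp : 0 < D := by linarith
  have ht : 0 < (D / 2 - A) / D := div_pos (by linarith) hDp
  have ht1 : (D / 2 - A) / D < 1 := by rw [div_lt_one hDp]; linarith
  have h := key _ ht ht1
  have h3 : (D / 2 - A) / D * D = D / 2 - A := div_mul_cancel₀ _ hDp.ne'
  linarith

/-- Relating the local primal iterates to the centralized ones:
`Σ_k [f(x_i(k)) - f(x*)] ≤ Σ_k [f(y(k)) - f(x*)] + L Σ_k η(k) ‖z̄(k) - z_i(k)‖`. -/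
theorem stmt_4 (d n K : ℕ) (hd : 0 < d) (hn : 0 < n) (hK : 0 < K)
    (X : Set (EuclideanSpace ℝ (Fin d))) (hXc : IsClosed X) (hXconv : Convex ℝ X)
    (ψ : EuclideanSpace ℝ (Fin d) → ℝ) (hψ : StrongConvexOn X 1 ψ)
    (f : EuclideanSpace ℝ (Fin d) → ℝ) (hfconv : ConvexOn ℝ X f)
    (L : ℝ) (hL : 0 < L) (hLip : ∀ x ∈ X, ∀ y ∈ X, |f x - f y| ≤ L * ‖x - y‖)
    (η : ℕ → ℝ) (hη : ∀ k ∈ Icc 1 K, 0 < η k)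
    (z : Fin n → ℕ → EuclideanSpace ℝ (Fin d))
    (zbar : ℕ → EuclideanSpace ℝ (Fin d))
    (hzbar : ∀ k, zbar k = (n : ℝ)⁻¹ • ∑ j : Fin n, z j k)
    (x : Fin n → ℕ → EuclideanSpace ℝ (Fin d))
    (y : ℕ → EuclideanSpace ℝ (Fin d))
    (hxmem : ∀ i, ∀ k ∈ Icc 1 K, x i k ∈ X)
    (hxmin : ∀ i, ∀ k ∈ Icc 1 K, ∀ w ∈ X,
      ⟪z i k, x i k⟫ + ψ (x i k) / η k ≤ ⟪z i k, w⟫ + ψ w / η k)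
    (hymem : ∀ k ∈ Icc 1 K, y k ∈ X)
    (hymin : ∀ k ∈ Icc 1 K, ∀ w ∈ X,
      ⟪zbar k, y k⟫ + ψ (y k) / η k ≤ ⟪zbar k, w⟫ + ψ w / η k) :
    ∀ i : Fin n, ∀ xstar ∈ X,
      ∑ k ∈ Icc 1 K, (f (x i k) - f xstar)
        ≤ ∑ k ∈ Icc 1 K, (f (y k) - f xstar)
          + L * ∑ k ∈ Icc 1 K, η k * ‖zbar k - z i k‖ := by
  intro i xstar _
  rw [Finset.mul_sum, ← Finset.sum_add_distrib]
  refine Finset.sum_le_sum fun k hk => ?_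
  have he := hη k hk
  have h1 := aux_min X ψ hψ (η k) he _ _ (hxmem i k hk) (hxmin i k hk) _ (hymem k hk)
  have h2 := aux_min X ψ hψ (η k) he _ _ (hymem k hk) (hymin k hk) _ (hxmem i k hk)
  rw [norm_sub_rev (y k)] at h2
  have h3 : ‖x i k - y k‖ ^ 2 ≤ η k * ⟪zbar k - z i k, x i k - y k⟫ := by
    simp only [inner_sub_left, inner_sub_right]
    linarith
  have h4 := mul_le_mul_of_nonneg_left
    (real_inner_le_norm (zbar k - z i k) (x i k - y k)) he.le
  have h5 : ‖x i k - y k‖ ≤ η k * ‖zbar k - z i k‖ := by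
    rcases (norm_nonneg (x i k - y k)).eq_or_lt with h0 | h0
    · rw [← h0]; positivity
    · refine le_of_mul_le_mul_right ?_ h0
      linarith
  have h6 := (le_abs_self _).trans (hLip _ (hxmem i k hk) _ (hymem k hk))
  have h7 := mul_le_mul_of_nonneg_left h5 hL.le
  linarith
end

section
/- Let d, n, K be positive integers, X ⊆ ℝ^d a closed convex set, ψ : ℝ^d → ℝ 1-strongly convex on X with respect to the Euclidean norm, and let f : ℝ^d → ℝ be convex and L-Lipschitz on X with respect to the Euclidean norm. Let η(1), …, η(K) > 0, let z_1(k), …, z_n(k) ∈ ℝ^d for k ∈ {1,…,K}, and set z̄(k) = (1/n) Σ_{j=1}^n z_j(k). For each k, let x_i(k) ∈ X be a minimizer over X of x ↦ ⟨z_i(k), x⟩ + ψ(x)/η(k), and y(k) ∈ X a minimizer over X of x ↦ ⟨z̄(k), x⟩ + ψ(x)/η(k). Define the running averages x̂_i(K) = (1/K) Σ_{k=1}^K x_i(k) and ŷ(K) = (1/K) Σ_{k=1}^K y(k). Then for every i ∈ {1,…,n} and every x* ∈ X: f(x̂_i(K)) - f(x*) ≤ f(ŷ(K)) - f(x*) +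 (L/K) Σ_{k=1}^K η(k) ‖z̄(k) - z_i(k)‖₂. -/
open scoped RealInnerProductSpace
open Finset

lemma growth_aux_s5 {d : ℕ} {X : Set (EuclideanSpace ℝ (Fin d))}
    {ψ : EuclideanSpace ℝ (Fin d) → ℝ} (hψ : StrongConvexOn X 1 ψ)
    {e : ℝ} (he : 0 < e) {u p q : EuclideanSpace ℝ (Fin d)} (hp : p ∈ X) (hq : q ∈ X)
    (hmin : ∀ w ∈ X, ⟪u, p⟫ + ψ p / e ≤ ⟪u, w⟫ + ψ w / e) :
    ‖p - q‖ ^ 2 / 2 ≤ e * (⟪u, q⟫ - ⟪u, p⟫) + (ψ q - ψ p) := by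
  have key : ∀ t : ℝ, 0 < t → t < 1 →
      (1 - t) * (‖p - q‖ ^ 2 / 2) ≤ e * (⟪u, q⟫ - ⟪u, p⟫) + (ψ q - ψ p) := by
    intro t ht0 ht1
    have hw := hψ.1 hp hq (by linarith : 0 ≤ 1 - t) ht0.le (by ring)
    have h1 := hψ.2 hp hq (by linarith : 0 ≤ 1 - t) ht0.le (by ring)
    have h2 := hmin _ hw
    have h3 : e * ⟪u, p⟫ + ψ p ≤ e * ⟪u, (1 - t) • p + t • q⟫ + ψ ((1 - t) • p + t • q) := by
      have := mul_le_mul_of_nonneg_left h2 he.le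
      rwa [mul_add, mul_add, mul_div_cancel₀ _ he.ne', mul_div_cancel₀ _ he.ne'] at this
    rw [inner_add_right, inner_smul_right, inner_smul_right] at h3
    simp only [smul_eq_mul] at h1
    refine le_of_mul_le_mul_left ?_ ht0
    linarith
  set A := e * (⟪u, q⟫ - ⟪u, p⟫) + (ψ q - ψ p)
  set B := ‖p - q‖ ^ 2 / 2 with hB
  have hB0 : 0 ≤ B := by positivity
  by_contra! hlt
  have hA : 0 ≤ A := by
    have := key (1/2) (by norm_num) (by norm_num)
    linarith
  have hBp : 0 < B := by linarith
  have := key ((B - A) / (2 * B)) (by apply div_pos <;> linarith)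
    (by rw [div_lt_one (by linarith)]; linarith)
  have h2 : (1 - (B - A) / (2 * B)) * B = (A + B) / 2 := by field_simp; ring
  linarith

lemma proj_lip_aux {d : ℕ} {X : Set (EuclideanSpace ℝ (Fin d))}
    {ψ : EuclideanSpace ℝ (Fin d) → ℝ} (hψ : StrongConvexOn X 1 ψ)
    {e : ℝ} (he : 0 < e) {u v p q : EuclideanSpace ℝ (Fin d)} (hp : p ∈ X) (hq : q ∈ X)
    (hpmin : ∀ w ∈ X, ⟪u, p⟫ + ψ p / e ≤ ⟪u, w⟫ + ψ w / e)
    (hqmin : ∀ w ∈ X, ⟪v, q⟫ + ψ q / e ≤ ⟪v, w⟫ + ψ w / e) :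
    ‖p - q‖ ≤ e * ‖v - u‖ := by
  have h1 := growth_aux_s5 hψ he hp hq hpmin
  have h2 := growth_aux_s5 hψ he hq hp hqmin
  rw [norm_sub_rev q p] at h2
  have h3 := mul_le_mul_of_nonneg_left (real_inner_le_norm (v - u) (p - q)) he.le
  rw [inner_sub_left, inner_sub_right, inner_sub_right] at h3
  by_contra! hlt
  have h0 : 0 ≤ e * ‖v - u‖ := by positivity
  have h5 : 0 < ‖p - q‖ := by linarith
  nlinarith [mul_lt_mul_of_pos_right hlt h5]

/-- Relating the local primal iterates to the centralized ones:
iteration-averaged version: `f(x̂_i(K)) - f(x*) ≤ f(ŷ(K)) - f(x*) + (L/K) Σ_k η(k) ‖z̄(k) - z_i(k)‖`. -/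
theorem stmt_5 (d n K : ℕ) (hd : 0 < d) (hn : 0 < n) (hK : 0 < K)
    (X : Set (EuclideanSpace ℝ (Fin d))) (hXc : IsClosed X) (hXconv : Convex ℝ X)
    (ψ : EuclideanSpace ℝ (Fin d) → ℝ) (hψ : StrongConvexOn X 1 ψ)
    (f : EuclideanSpace ℝ (Fin d) → ℝ) (hfconv : ConvexOn ℝ X f)
    (L : ℝ) (hL : 0 < L) (hLip : ∀ x ∈ X, ∀ y ∈ X, |f x - f y| ≤ L * ‖x - y‖)
    (η : ℕ → ℝ) (hη : ∀ k ∈ Icc 1 K, 0 < η k)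
    (z : Fin n → ℕ → EuclideanSpace ℝ (Fin d))
    (zbar : ℕ → EuclideanSpace ℝ (Fin d))
    (hzbar : ∀ k, zbar k = (n : ℝ)⁻¹ • ∑ j : Fin n, z j k)
    (x : Fin n → ℕ → EuclideanSpace ℝ (Fin d))
    (y : ℕ → EuclideanSpace ℝ (Fin d))
    (hxmem : ∀ i, ∀ k ∈ Icc 1 K, x i k ∈ X)
    (hxmin : ∀ i, ∀ k ∈ Icc 1 K, ∀ w ∈ X,
      ⟪z i k, x i k⟫ + ψ (x i k) / η k ≤ ⟪z i k, w⟫ + ψ w / η k)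
    (hymem : ∀ k ∈ Icc 1 K, y k ∈ X)
    (hymin : ∀ k ∈ Icc 1 K, ∀ w ∈ X,
      ⟪zbar k, y k⟫ + ψ (y k) / η k ≤ ⟪zbar k, w⟫ + ψ w / η k) :
    ∀ i : Fin n, ∀ xstar ∈ X,
      f ((K : ℝ)⁻¹ • ∑ k ∈ Icc 1 K, x i k) - f xstar
        ≤ f ((K : ℝ)⁻¹ • ∑ k ∈ Icc 1 K, y k) - f xstar
          + (L / K) * ∑ k ∈ Icc 1 K, η k * ‖zbar k - z i k‖ := by
  intro i xstar _
  have hKr : (0 : ℝ) < K := by exact_mod_cast hK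
  have hmem : ∀ g : ℕ → EuclideanSpace ℝ (Fin d), (∀ k ∈ Icc 1 K, g k ∈ X) →
      (K : ℝ)⁻¹ • ∑ k ∈ Icc 1 K, g k ∈ X := by
    intro g hg
    rw [Finset.smul_sum]
    refine hXconv.sum_mem (fun _ _ => by positivity) ?_ hg
    simp [hKr.ne']
  have h1 := (le_abs_self _).trans (hLip _ (hmem _ (hxmem i)) _ (hmem _ hymem))
  have h2 : ‖(K : ℝ)⁻¹ • ∑ k ∈ Icc 1 K, x i k - (K : ℝ)⁻¹ • ∑ k ∈ Icc 1 K, y k‖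
      ≤ (K : ℝ)⁻¹ * ∑ k ∈ Icc 1 K, η k * ‖zbar k - z i k‖ := by
    rw [← smul_sub, ← Finset.sum_sub_distrib, norm_smul, Real.norm_of_nonneg (by positivity)]
    refine mul_le_mul_of_nonneg_left ?_ (by positivity)
    refine norm_sum_le_of_le _ fun k hk => ?_
    exact proj_lip_aux hψ (hη k hk) (hxmem i k hk) (hymem k hk) (hxmin i k hk) (hymin k hk)
  have h3 := mul_le_mul_of_nonneg_left h2 hL.le
  rw [← mul_assoc, ← div_eq_mul_inv] at h3
  linarith
end

section
/- Let P be an n×n symmetric doubly stochastic matrix (nonnegative entries, each row and each column sums to 1) with eigenvalues 1 = λ₁ ≥ λ₂ ≥ … ≥ λ_n, let λ = max{λ₂, -λ_n}, and assume λ < 1. Let 0 < c₀ ≤ 1, 0 < γ < 1, and for t ≥ 1 set β(t) = c₀ t^{-γ} and W(t) = (1 - β(t)) I + β(t) P. Let L > 0 and let z_1, …, z_n : ℕ → ℝ^d satisfy z_i(0) = 0 and z_i(k+1) = Σ_{j=1}^n W(k)_{ij} z_j(k) + g_i(k), where g_i(k) ∈ ℝ^d with ‖g_i(k)‖₂ ≤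 L. Set z̄(k) = (1/n) Σ_{j=1}^n z_j(k). Then for every horizon K ≥ 1, every k ∈ {1, …, K}, and every i ∈ {1,…,n}: ‖z̄(k) - z_i(k)‖₂ ≤ (2L / (c₀ (1 - λ))) · K^γ · log(K √n) + 3L. -/
open Finset Matrix

lemma aux_parseval (n : ℕ) (v : Fin n → (Fin n → ℝ))
    (hON : ∀ i j, v i ⬝ᵥ v j = if i = j then (1 : ℝ) else 0) (x y : Fin n → ℝ) :
    ∑ i, (v i ⬝ᵥ x) * (v i ⬝ᵥ y) = x ⬝ᵥ y := by
  have h1 : (Matrix.of v) * (Matrix.of v)ᵀ = 1 := by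
    ext i j
    rw [Matrix.mul_apply', Matrix.one_apply]
    exact hON i j
  have h2 : (Matrix.of v)ᵀ * (Matrix.of v) = 1 := mul_eq_one_comm.mp h1
  have h3 : ∑ i, (v i ⬝ᵥ x) * (v i ⬝ᵥ y)
      = ((Matrix.of v).mulVec x) ⬝ᵥ ((Matrix.of v).mulVec y) := rfl
  rw [h3, Matrix.dotProduct_mulVec, Matrix.vecMul_mulVec, h2, Matrix.vecMul_one]

lemma aux_contract (n : ℕ) (hn : 2 ≤ n)
    (P : Matrix (Fin n) (Fin n) ℝ) (hsym : P.IsSymm)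
    (hrow : ∀ i, ∑ j, P i j = 1)
    (μ : Fin n → ℝ) (hmono : Antitone μ)
    (v : Fin n → (Fin n → ℝ))
    (hON : ∀ i j, v i ⬝ᵥ v j = if i = j then (1 : ℝ) else 0)
    (heig : ∀ i, P.mulVec (v i) = μ i • v i)
    (lam : ℝ) (hlam : lam = max (μ ⟨1, by omega⟩) (-(μ ⟨n - 1, by omega⟩)))
    (hlam1 : lam < 1) (b : ℝ) (hb0 : 0 ≤ b) (hb1 : b ≤ 1)
    (x : Fin n → ℝ) (hx : ∑ j, x j = 0) :
    ∑ j, (((1 - b) • (1 : Matrix (Fin n) (Fin n) ℝ) + b • P).mulVec x j) ^ 2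
      ≤ (1 - b * (1 - lam)) ^ 2 * ∑ j, x j ^ 2 := by
  have hself : ∀ (y w : Fin n → ℝ), y ⬝ᵥ P.mulVec w = (P.mulVec y) ⬝ᵥ w := by
    intro y w
    rw [Matrix.dotProduct_mulVec, ← Matrix.mulVec_transpose, hsym.eq]
  have hone : P.mulVec (fun _ => (1:ℝ)) = fun _ => 1 := by
    ext i
    simp [Matrix.mulVec, dotProduct, hrow]
  have hle : ∀ i : Fin n, i ≠ ⟨0, by omega⟩ → μ i ≤ lam := by
    intro i hi
    rw [hlam]
    refine le_trans (hmono ?_) (le_max_left _ _)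
    rw [Fin.le_def]
    have : i.val ≠ 0 := fun h => hi (Fin.ext h)
    simp only
    omega
  have hge : ∀ i : Fin n, -lam ≤ μ i := by
    intro i
    have h1 : -(μ ⟨n - 1, by omega⟩) ≤ lam := by rw [hlam]; exact le_max_right _ _
    have h2 : μ ⟨n - 1, by omega⟩ ≤ μ i := hmono (by rw [Fin.le_def]; have := i.2; simp only; omega)
    linarith
  have horth : ∀ i : Fin n, i ≠ ⟨0, by omega⟩ → v i ⬝ᵥ (fun _ => (1:ℝ)) = 0 := by
    intro i hi
    have h := hself (v i) (fun _ => 1)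
    rw [hone, heig, smul_dotProduct, smul_eq_mul] at h
    have h1 := hle i hi
    have : (1 - μ i) * (v i ⬝ᵥ (fun _ => (1:ℝ))) = 0 := by linarith
    rcases mul_eq_zero.mp this with h2 | h2
    · linarith
    · exact h2
  have hx0 : v ⟨0, by omega⟩ ⬝ᵥ x = 0 := by
    have h1 := aux_parseval n v hON x (fun _ => 1)
    have h2 := aux_parseval n v hON (fun _ => 1) (fun _ => 1)
    rw [Finset.sum_eq_single ⟨0, by omega⟩ (by intro i _ hi; rw [horth i hi, mul_zero])
      (by simp)] at h1 h2
    have h3 : x ⬝ᵥ (fun _ => (1:ℝ)) = 0 := by simpa [dotProduct] using hx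
    have h4 : (fun _ : Fin n => (1:ℝ)) ⬝ᵥ (fun _ => (1:ℝ)) = n := by simp [dotProduct]
    rw [h3] at h1
    rw [h4] at h2
    rcases mul_eq_zero.mp h1 with h5 | h5
    · exact h5
    · rw [h5] at h2
      have : (2:ℝ) ≤ n := by exact_mod_cast hn
      linarith
  have hsq : ∀ y : Fin n → ℝ, ∑ j, y j ^ 2 = ∑ i, (v i ⬝ᵥ y) ^ 2 := by
    intro y
    have := aux_parseval n v hON y y
    simp only [← sq] at this
    rw [this]
    simp [dotProduct, sq]
  rw [hsq, hsq x, Finset.mul_sum]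
  apply Finset.sum_le_sum
  intro i _
  have hc : v i ⬝ᵥ (((1 - b) • (1 : Matrix (Fin n) (Fin n) ℝ) + b • P).mulVec x)
      = (1 - b + b * μ i) * (v i ⬝ᵥ x) := by
    rw [Matrix.add_mulVec, Matrix.smul_mulVec, Matrix.smul_mulVec, Matrix.one_mulVec,
      dotProduct_add, dotProduct_smul, dotProduct_smul, hself, heig, smul_dotProduct]
    simp only [smul_eq_mul]
    ring
  rw [hc, mul_pow]
  by_cases hi : i = ⟨0, by omega⟩
  · rw [hi, hx0]; simp
  · refine mul_le_mul_of_nonneg_right ?_ (sq_nonneg _)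
    have h1 := mul_le_mul_of_nonneg_left (hle i hi) hb0
    have h2 := mul_le_mul_of_nonneg_left (hge i) hb0
    apply sq_le_sq'
    · nlinarith
    · nlinarith

lemma aux_l1 (n : ℕ) (W : Matrix (Fin n) (Fin n) ℝ) (hW0 : ∀ i j, 0 ≤ W i j)
    (hcol : ∀ j, ∑ i, W i j = 1) (x : Fin n → ℝ) :
    ∑ i, |W.mulVec x i| ≤ ∑ j, |x j| := by
  calc ∑ i, |W.mulVec x i| ≤ ∑ i, ∑ j, W i j * |x j| := by
        apply Finset.sum_le_sum
        intro i _
        have h : |∑ j, W i j * x j| ≤ ∑ j, |W i j * x j| := Finset.abs_sum_le_sum_abs _ _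
        refine h.trans (le_of_eq ?_)
        apply Finset.sum_congr rfl
        intro j _
        rw [abs_mul, abs_of_nonneg (hW0 i j)]
    _ = ∑ j, |x j| := by
        rw [Finset.sum_comm]
        apply Finset.sum_congr rfl
        intro j _
        rw [← Finset.sum_mul, hcol, one_mul]

lemma aux_ind (n d : ℕ) (K : ℕ) (W : ℕ → Matrix (Fin n) (Fin n) ℝ) (q : ℝ) (hq : 0 ≤ q)
    (hWs : ∀ t, 1 ≤ t → (W t).IsSymm)
    (hW0 : ∀ t, 1 ≤ t → ∀ i j, 0 ≤ W t i j)
    (hcol : ∀ t, 1 ≤ t → ∀ j, ∑ i, W t i j = 1)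
    (hcon : ∀ t, 1 ≤ t → t ≤ K → ∀ x : Fin n → ℝ, ∑ j, x j = 0 →
      ∑ j, ((W t).mulVec x j) ^ 2 ≤ q ^ 2 * ∑ j, x j ^ 2)
    (L : ℝ) (hL : 0 < L)
    (z : Fin n → ℕ → EuclideanSpace ℝ (Fin d))
    (g : Fin n → ℕ → EuclideanSpace ℝ (Fin d))
    (hz0 : ∀ i, z i 0 = 0)
    (hgbound : ∀ i k, ‖g i k‖ ≤ L)
    (hrec : ∀ i k, z i (k + 1) = (∑ j : Fin n, W k i j • z j k) + g i k)
    (A : ℝ) (hA : 0 ≤ A) :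
    ∀ k, k ≤ K → ∀ (x : Fin n → ℝ) (B : ℝ), 0 ≤ B → ∑ j, x j = 0 → ∑ j, |x j| ≤ A →
      ∑ j, x j ^ 2 ≤ B ^ 2 →
      ‖∑ j, x j • z j k‖ ≤ ∑ m ∈ Finset.range k, L * min A (Real.sqrt n * (q ^ m * B)) := by
  intro k
  induction k with
  | zero => intro _ x B _ _ _ _; simp [hz0]
  | succ k ih =>
    intro hk x B hB hx hxA hxB
    have hg : ‖∑ j, x j • g j k‖ ≤ L * min A (Real.sqrt n * (q ^ 0 * B)) := by
      have h1 : ‖∑ j, x j • g j k‖ ≤ L * ∑ j, |x j| := by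
        rw [Finset.mul_sum]
        refine norm_sum_le_of_le _ ?_
        intro j _
        rw [norm_smul, Real.norm_eq_abs, mul_comm]
        exact mul_le_mul_of_nonneg_right (hgbound j k) (abs_nonneg _)
      refine h1.trans (mul_le_mul_of_nonneg_left (le_min hxA ?_) hL.le)
      rw [pow_zero, one_mul]
      refine (sq_le_sq₀ (Finset.sum_nonneg fun _ _ => abs_nonneg _) (by positivity)).mp ?_
      rw [mul_pow, Real.sq_sqrt (by positivity)]
      have h2 := sq_sum_le_card_mul_sum_sq (s := (Finset.univ : Finset (Fin n)))
        (f := fun j => |x j|)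
      simp only [sq_abs, Finset.card_univ, Fintype.card_fin] at h2
      exact h2.trans (mul_le_mul_of_nonneg_left hxB (by positivity))
    have hsplit : ∑ j, x j • z j (k+1)
        = (∑ j, x j • ∑ l, W k j l • z l k) + ∑ j, x j • g j k := by
      rw [← Finset.sum_add_distrib]
      apply Finset.sum_congr rfl
      intro j _
      rw [hrec, smul_add]
    rw [hsplit, Finset.sum_range_succ']
    refine (norm_add_le _ _).trans (add_le_add ?_ hg)
    rcases Nat.eq_zero_or_pos k with h0 | h0
    · subst h0; simp [hz0]
    · have hmv : ∑ j, x j • ∑ l, W k j l • z l k = ∑ l, ((W k).mulVec x l) • z l k := by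
        simp only [Finset.smul_sum, smul_smul]
        rw [Finset.sum_comm]
        apply Finset.sum_congr rfl
        intro l _
        rw [← Finset.sum_smul]
        congr 1
        simp only [Matrix.mulVec, dotProduct]
        apply Finset.sum_congr rfl
        intro j _
        rw [(hWs k h0).apply, mul_comm]
      rw [hmv]
      refine (ih (by omega) _ (q * B) (by positivity) ?_
        ((aux_l1 n (W k) (hW0 k h0) (hcol k h0) x).trans hxA) ?_).trans (le_of_eq ?_)
      · simp only [Matrix.mulVec, dotProduct]
        rw [Finset.sum_comm]
        simp only [← Finset.sum_mul, hcol k h0, one_mul, hx]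
      · refine (hcon k h0 (by omega) x hx).trans ?_
        rw [mul_pow]
        exact mul_le_mul_of_nonneg_left hxB (sq_nonneg _)
      · apply Finset.sum_congr rfl
        intro m _
        rw [pow_succ, mul_assoc]

lemma aux_sum (K k : ℕ) (hK : 1 ≤ K) (hk : k ≤ K) (s a : ℝ) (hs : 1 ≤ s) (ha : 0 < a)
    (ha1 : a ≤ 1) :
    ∑ m ∈ Finset.range k, min 2 (s * (1 - a) ^ m) ≤ 2 * (Real.log (K * s) / a) + 3 := by
  have hK' : (1:ℝ) ≤ K := by exact_mod_cast hK
  have hlog : 0 ≤ Real.log (K * s) := Real.log_nonneg (one_le_mul_of_one_le_of_one_le hK' hs)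
  set T := ⌈Real.log (K * s) / a⌉₊ with hT
  have hT1 : (T:ℝ) ≤ Real.log (K * s) / a + 1 := (Nat.ceil_lt_add_one (by positivity)).le
  have hT2 : Real.log (K * s) / a ≤ T := Nat.le_ceil _
  have hterm : ∀ m ∈ Finset.range k,
      min 2 (s * (1 - a) ^ m) ≤ (if m < T then 2 else 0) + 1 / (K:ℝ) := by
    intro m _
    split_ifs with h
    · exact (min_le_left _ _).trans (by simp)
    · rw [zero_add]
      refine (min_le_right _ _).trans ?_
      have hm : (T:ℝ) ≤ m := by exact_mod_cast not_lt.mp h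
      have h1 : Real.log (K * s) ≤ a * m := by
        have := (div_le_iff₀ ha).mp (hT2.trans hm)
        linarith
      have h2 : K * s ≤ Real.exp (a * m) := by
        rw [← Real.log_le_iff_le_exp (by positivity)]; exact h1
      have h3 : (1 - a) ^ m ≤ Real.exp (-(a * m)) := by
        have : (1 - a) ^ m ≤ (Real.exp (-a)) ^ m :=
          pow_le_pow_left₀ (by linarith) (Real.one_sub_le_exp_neg a) m
        refine this.trans (le_of_eq ?_)
        rw [← Real.exp_nat_mul]; congr 1; ring
      rw [le_div_iff₀ (by positivity)]
      calc s * (1 - a) ^ m * K = (K * s) * (1 - a) ^ m := by ring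
        _ ≤ Real.exp (a * m) * Real.exp (-(a * m)) := by
            apply mul_le_mul h2 h3 (pow_nonneg (by linarith) _) (Real.exp_pos _).le
        _ = 1 := by rw [← Real.exp_add]; simp
  refine (Finset.sum_le_sum hterm).trans ?_
  rw [Finset.sum_add_distrib, ← Finset.sum_filter]
  simp only [Finset.sum_const, Finset.card_range, nsmul_eq_mul]
  have hc : (((Finset.range k).filter (fun m => m < T)).card : ℝ) ≤ T := by
    have : ((Finset.range k).filter (fun m => m < T)).card ≤ (Finset.range T).card := by
      apply Finset.card_le_card
      intro m hm
      simp only [Finset.mem_filter, Finset.mem_range] at hm ⊢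
      exact hm.2
    rw [Finset.card_range] at this
    exact_mod_cast this
  have hkk : (k:ℝ) * (1 / K) ≤ 1 := by
    rw [mul_one_div, div_le_one (by positivity)]
    exact_mod_cast hk
  linarith

/-- Network consensus error bound for decentralized lazy mirror descent with
diminishing confidences (exact oracle, noiseless channels, infinite data rate):
`‖z̄(k) - z_i(k)‖ ≤ (2L/(c₀(1-λ))) K^γ log(K√n) + 3L`. -/
theorem stmt_11 (n d : ℕ) (hn : 2 ≤ n) (hd : 0 < d)
    (P : Matrix (Fin n) (Fin n) ℝ) (hsym : P.IsSymm)
    (hnonneg : ∀ i j, 0 ≤ P i j)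
    (hrow : ∀ i, ∑ j, P i j = 1) (hcol : ∀ j, ∑ i, P i j = 1)
    -- the eigenvalues of `P`, sorted in nonincreasing order, with orthonormal eigenvectors
    (μ : Fin n → ℝ) (hmono : Antitone μ) (hμ0 : μ ⟨0, by omega⟩ = 1)
    (v : Fin n → (Fin n → ℝ))
    (hON : ∀ i j, v i ⬝ᵥ v j = if i = j then (1 : ℝ) else 0)
    (heig : ∀ i, P.mulVec (v i) = μ i • v i)
    (lam : ℝ) (hlam : lam = max (μ ⟨1, by omega⟩) (-(μ ⟨n - 1, by omega⟩)))
    (hlam1 : lam < 1)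
    (c₀ γ : ℝ) (hc₀ : 0 < c₀) (hc₀1 : c₀ ≤ 1) (hγ : 0 < γ) (hγ1 : γ < 1)
    (β : ℕ → ℝ) (hβ : ∀ t : ℕ, 1 ≤ t → β t = c₀ * (t : ℝ) ^ (-γ))
    (W : ℕ → Matrix (Fin n) (Fin n) ℝ)
    (hW : ∀ t : ℕ, 1 ≤ t → W t = (1 - β t) • (1 : Matrix (Fin n) (Fin n) ℝ) + β t • P)
    (L : ℝ) (hL : 0 < L)
    (z : Fin n → ℕ → EuclideanSpace ℝ (Fin d))
    (g : Fin n → ℕ → EuclideanSpace ℝ (Fin d))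
    (hz0 : ∀ i, z i 0 = 0)
    (hgbound : ∀ i k, ‖g i k‖ ≤ L)
    (hrec : ∀ i k, z i (k + 1) = (∑ j : Fin n, W k i j • z j k) + g i k)
    (zbar : ℕ → EuclideanSpace ℝ (Fin d))
    (hzbar : ∀ k, zbar k = (n : ℝ)⁻¹ • ∑ j : Fin n, z j k) :
    ∀ K : ℕ, 1 ≤ K → ∀ k ∈ Icc 1 K, ∀ i : Fin n,
      ‖zbar k - z i k‖
        ≤ (2 * L / (c₀ * (1 - lam))) * (K : ℝ) ^ γ * Real.log (K * Real.sqrt n)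
          + 3 * L := by
  intro K hK k hk i
  obtain ⟨hk1, hkK⟩ := Finset.mem_Icc.mp hk
  have hK' : (1:ℝ) ≤ K := by exact_mod_cast hK
  have hn' : (2:ℝ) ≤ n := by exact_mod_cast hn
  have hlam0 : 0 ≤ lam := by
    have h1 : μ ⟨1, by omega⟩ ≤ lam := by rw [hlam]; exact le_max_left _ _
    have h2 : -(μ ⟨n - 1, by omega⟩) ≤ lam := by rw [hlam]; exact le_max_right _ _
    have h3 : μ ⟨n - 1, by omega⟩ ≤ μ ⟨1, by omega⟩ :=
      hmono (by rw [Fin.le_def]; simp only; omega)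
    linarith
  have hb0 : ∀ t : ℕ, 1 ≤ t → 0 ≤ β t := by
    intro t ht; rw [hβ t ht]; positivity
  have hb1 : ∀ t : ℕ, 1 ≤ t → β t ≤ 1 := by
    intro t ht; rw [hβ t ht]
    have : (t:ℝ) ^ (-γ) ≤ 1 :=
      Real.rpow_le_one_of_one_le_of_nonpos (by exact_mod_cast ht) (by linarith)
    exact mul_le_one₀ hc₀1 (by positivity) this
  set a : ℝ := c₀ * (K:ℝ) ^ (-γ) * (1 - lam) with ha_def
  have hKp : 0 < (K:ℝ) ^ (-γ) := Real.rpow_pos_of_pos (by linarith) _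
  have ha : 0 < a := mul_pos (mul_pos hc₀ hKp) (by linarith)
  have ha1 : a ≤ 1 := by
    have := hb1 K hK
    rw [hβ K hK] at this
    exact mul_le_one₀ this (by linarith) (by linarith)
  have hcon : ∀ t, 1 ≤ t → t ≤ K → ∀ x : Fin n → ℝ, ∑ j, x j = 0 →
      ∑ j, ((W t).mulVec x j) ^ 2 ≤ (1 - a) ^ 2 * ∑ j, x j ^ 2 := by
    intro t ht htK x hx
    rw [hW t ht]
    refine (aux_contract n hn P hsym hrow μ hmono v hON heig lam hlam hlam1 (β t) (hb0 t ht)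
      (hb1 t ht) x hx).trans ?_
    refine mul_le_mul_of_nonneg_right ?_ (Finset.sum_nonneg fun _ _ => sq_nonneg _)
    have h1 : a ≤ β t * (1 - lam) := by
      rw [hβ t ht]
      refine mul_le_mul_of_nonneg_right (mul_le_mul_of_nonneg_left ?_ hc₀.le) (by linarith)
      exact Real.rpow_le_rpow_of_nonpos (by exact_mod_cast ht) (by exact_mod_cast htK)
        (by linarith)
    have h2 : β t * (1 - lam) ≤ 1 := mul_le_one₀ (hb1 t ht) (by linarith) (by linarith)
    exact pow_le_pow_left₀ (by linarith) (by linarith) 2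
  have hWs : ∀ t, 1 ≤ t → (W t).IsSymm := by
    intro t ht
    rw [hW t ht, Matrix.IsSymm, Matrix.transpose_add, Matrix.transpose_smul,
      Matrix.transpose_smul, Matrix.transpose_one, hsym.eq]
  have hW0 : ∀ t, 1 ≤ t → ∀ i j, 0 ≤ W t i j := by
    intro t ht i j
    rw [hW t ht]
    simp only [Matrix.add_apply, Matrix.smul_apply, smul_eq_mul, Matrix.one_apply]
    have h1 := mul_nonneg (hb0 t ht) (hnonneg i j)
    have h2 := hb1 t ht
    split_ifs <;> linarith
  have hWc : ∀ t, 1 ≤ t → ∀ j, ∑ i, W t i j = 1 := by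
    intro t ht j
    rw [hW t ht]
    simp only [Matrix.add_apply, Matrix.smul_apply, smul_eq_mul, Finset.sum_add_distrib,
      ← Finset.mul_sum, hcol, Matrix.one_apply]
    simp
  have hninv : (n:ℝ) * (n:ℝ)⁻¹ = 1 := mul_inv_cancel₀ (by linarith)
  have hninv0 : 0 < (n:ℝ)⁻¹ := by positivity
  let x : Fin n → ℝ := fun j => (n:ℝ)⁻¹ - if j = i then 1 else 0
  have hxz : zbar k - z i k = ∑ j, x j • z j k := by
    simp only [x, sub_smul, Finset.sum_sub_distrib, ← Finset.smul_sum, hzbar, ite_smul,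
      one_smul, zero_smul]
    simp
  have hx0 : ∑ j, x j = 0 := by
    simp only [x, Finset.sum_sub_distrib]
    simp [hninv]
  have hx1 : ∑ j, |x j| ≤ 2 := by
    calc ∑ j, |x j| ≤ ∑ j : Fin n, ((n:ℝ)⁻¹ + if j = i then (1:ℝ) else 0) := by
          apply Finset.sum_le_sum
          intro j _
          simp only [x]
          split_ifs <;> rw [abs_le] <;> constructor <;> linarith
      _ = 2 := by
          rw [Finset.sum_add_distrib]
          simp [hninv]; norm_num
  have hx2 : ∑ j, x j ^ 2 ≤ 1 ^ 2 := by
    have : ∀ j, x j ^ 2 = (n:ℝ)⁻¹ * x j + (if j = i then (1 - (n:ℝ)⁻¹) else 0) := by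
      intro j; simp only [x]; split_ifs <;> ring
    simp only [this, Finset.sum_add_distrib, ← Finset.mul_sum, hx0]
    simp
  have hmain := aux_ind n d K W (1 - a) (by linarith) hWs hW0 hWc hcon L hL z g hz0 hgbound hrec
    2 (by norm_num) k hkK x 1 (by norm_num) hx0 hx1 hx2
  have hsum := aux_sum K k hK hkK (Real.sqrt n) a (Real.one_le_sqrt.mpr (by linarith)) ha ha1
  rw [hxz]
  refine hmain.trans ?_
  simp only [mul_one]
  rw [← Finset.mul_sum]
  refine (mul_le_mul_of_nonneg_left hsum hL.le).trans (le_of_eq ?_)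
  have hKg : (K:ℝ) ^ (-γ) = ((K:ℝ) ^ γ)⁻¹ := Real.rpow_neg (by linarith) _
  have hKg0 : (K:ℝ) ^ γ ≠ 0 := (Real.rpow_pos_of_pos (by linarith) _).ne'
  have hl : (1 - lam) ≠ 0 := by linarith
  rw [ha_def, hKg]
  field_simp
end
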